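/- Let A and B be finite groups with no common composition factors, i.e., there do not exist subgroups H₁ ≤ A, K₁ normal in H₁, H₂ ≤ B, K₂ normal in H₂ such that H₁/K₁ and H₂/K₂ are simple and isomorphic to each other. Then m_I(A × B) = m_I(A) + m_I(B). -/

import Mathlib

/-!
The key point is that, when `A` and `B` have no common simple section, a subgroup of `A × B` that
projects onto both factors is the whole product (`eq_top_of_map_fst_snd`, an instance of Goursat's
lemma: otherwise `A` and `B` have a common simple quotient). Consequently `S ⊆ A × B` invariably
generates `A × B` iff its two projections invariably generate `A` and `B` (`invGen_prod_iff`).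

For `≤`: inside a minimal invariable generating set `S` of `A × B` choose subsets `S₁`, `S₂` minimal
subject to their projections to `A`, resp. `B`, being invariable generating sets. These projections
are injective on `S₁`, `S₂` with minimal images, and `S₁ ∪ S₂` invariably generates `A × B`, so
`S = S₁ ∪ S₂`.

For `≥`: if `S` and `T` are minimal invariable generating sets of `A` and `B`, then
`S × {1} ∪ {1} × T` is one of `A × B`; here `1 ∉ S` and `1 ∉ T` by minimality. That a finite group
has a minimal invariable generating set at all is Jordan's theorem that the conjugates of a proper
subgroup do not cover the group (`invGen_univ`).
-/

/-- A subset `S` invariably generates `G` if for every choice of conjugators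
(one for each element), the conjugated set generates `G`. -/
def InvGen {G : Type*} [Group G] (S : Set G) : Prop :=
  ∀ σ : G → G, Subgroup.closure ((fun g => (σ g)⁻¹ * g * σ g) '' S) = ⊤

/-- `S` is a minimal invariable generating set of `G`. -/
def MinInvGen {G : Type*} [Group G] (S : Set G) : Prop :=
  InvGen S ∧ ∀ T : Set G, T ⊂ S → ¬ InvGen T

/-- `S` is a minimal generating set of `G`. -/
def MinGen {G : Type*} [Group G] (S : Set G) : Prop :=
  Subgroup.closure S = ⊤ ∧ ∀ T : Set G, T ⊂ S → Subgroup.closure T ≠ ⊤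

/-- `m(G)`: largest cardinality of a minimal generating set of `G`. -/
noncomputable def mGen (G : Type*) [Group G] : ℕ :=
  sSup {n : ℕ | ∃ S : Set G, MinGen S ∧ S.ncard = n}

/-- `m_I(G)`: largest cardinality of a minimal invariable generating set of `G`. -/
noncomputable def mInv (G : Type*) [Group G] : ℕ :=
  sSup {n : ℕ | ∃ S : Set G, MinInvGen S ∧ S.ncard = n}

/-- `d_I(G)`: smallest cardinality of a minimal invariable generating set of `G`. -/
noncomputable def dInv (G : Type*) [Group G] : ℕ :=
  sInf {n : ℕ | ∃ S : Set G, MinInvGen S ∧ S.ncard = n}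

/-- The union of all conjugates of a subgroup `M`, as a set. -/
def conjUnion {G : Type*} [Group G] (M : Subgroup G) : Set G :=
  ⋃ g : G, (fun m => g⁻¹ * m * g) '' (M : Set G)

/-- `A` and `B` have a common composition factor, i.e. isomorphic simple sections. -/
def HasCommonSimpleSection (A B : Type*) [Group A] [Group B] : Prop :=
  ∃ (H₁ : Subgroup A) (K₁ : Subgroup H₁) (hK₁ : K₁.Normal)
    (H₂ : Subgroup B) (K₂ : Subgroup H₂) (hK₂ : K₂.Normal),
      letI := hK₁
      letI := hK₂
      IsSimpleGroup (H₁ ⧸ K₁) ∧ IsSimpleGroup (H₂ ⧸ K₂) ∧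
        Nonempty ((H₁ ⧸ K₁) ≃* (H₂ ⧸ K₂))

/-! ### Invariable generating sets -/

lemma InvGen.mono {G : Type*} [Group G] {S T : Set G} (hS : InvGen S) (h : S ⊆ T) : InvGen T :=
  fun σ => top_le_iff.1 ((hS σ).symm.le.trans (Subgroup.closure_mono (Set.image_mono h)))

lemma InvGen.diff_one {G : Type*} [Group G] {S : Set G} (hS : InvGen S) : InvGen (S \ {1}) := by
  intro σ
  rw [← top_le_iff, ← hS σ, Subgroup.closure_le]
  rintro _ ⟨g, hg, rfl⟩
  by_cases h1 : g = 1
  · subst h1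
    simp
  · exact Subgroup.subset_closure ⟨g, ⟨hg, h1⟩, rfl⟩

lemma MinInvGen.eq_of_subset {G : Type*} [Group G] {S T : Set G} (hS : MinInvGen S) (hT : InvGen T)
    (h : T ⊆ S) : T = S := by
  by_contra hne
  exact hS.2 T (h.ssubset_of_ne hne) hT

lemma MinInvGen.one_notMem {G : Type*} [Group G] {S : Set G} (hS : MinInvGen S) : (1 : G) ∉ S := by
  intro h1
  have h := hS.eq_of_subset hS.1.diff_one Set.sdiff_subset
  rw [← h] at h1
  exact h1.2 rfl

lemma InvGen.image {G Q : Type*} [Group G] [Group Q] {S : Set G} (hS : InvGen S) (f : G →* Q)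
    (hf : Function.Surjective f) : InvGen (f '' S) := by
  intro σ
  choose s hs using hf
  have h := congrArg (Subgroup.map f) (hS fun g => s (σ (f g)))
  rw [MonoidHom.map_closure, Subgroup.map_top_of_surjective f fun q => ⟨s q, hs q⟩] at h
  rw [← h]
  congr 1
  simp only [Set.image_image, map_mul, map_inv, hs]

/-- Distinct elements of `S` with the same image may receive different conjugators; it suffices to
keep one preimage for each element of `f '' S`. -/
lemma map_closure_eq_top {G Q : Type*} [Group G] [Group Q] {S : Set G} (f : G →* Q)
    (hS : InvGen (f '' S)) (σ : G → G) :
    (Subgroup.closure ((fun g => (σ g)⁻¹ * g * σ g) '' S)).map f = ⊤ := by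
  classical
  have hr : ∀ q : Q, ∃ g : G, q ∈ f '' S → g ∈ S ∧ f g = q := by
    intro q
    by_cases hq : q ∈ f '' S
    · obtain ⟨g, hg⟩ := hq
      exact ⟨g, fun _ => hg⟩
    · exact ⟨1, fun h => absurd h hq⟩
  choose r hr using hr
  rw [← top_le_iff, ← hS fun q => f (σ (r q)), Subgroup.closure_le]
  rintro _ ⟨q, hq, rfl⟩
  obtain ⟨h1, h2⟩ := hr q hq
  exact ⟨_, Subgroup.subset_closure ⟨r q, h1, rfl⟩, by simp [h2]⟩

/-- Jordan's theorem, via Burnside's lemma: if the conjugates `(σ g)⁻¹ * g * σ g` all lie in `H`,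
every `g` fixes the point `σ g • H` of `G ⧸ H`, which forces the number of fixed points, of average
one, to be constantly one. -/
lemma invGen_univ (G : Type*) [Group G] [Finite G] : InvGen (Set.univ : Set G) := by
  classical
  intro σ
  set H := Subgroup.closure ((fun g => (σ g)⁻¹ * g * σ g) '' (Set.univ : Set G)) with hH
  have hmem : ∀ g, (σ g)⁻¹ * g * σ g ∈ H := fun g => Subgroup.subset_closure ⟨g, trivial, rfl⟩
  cases nonempty_fintype G
  have : Fintype (G ⧸ H) := Fintype.ofFinite _
  have : Fintype (Quotient (MulAction.orbitRel G (G ⧸ H))) := Fintype.ofFinite _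
  have hb := MulAction.sum_card_fixedBy_eq_card_orbits_mul_card_group G (G ⧸ H)
  have h1 : Fintype.card (Quotient (MulAction.orbitRel G (G ⧸ H))) = 1 := by
    have : Subsingleton (Quotient (MulAction.orbitRel G (G ⧸ H))) :=
      (MulAction.pretransitive_iff_subsingleton_quotient G (G ⧸ H)).1 inferInstance
    exact Fintype.card_eq_one_iff_nonempty_unique.2
      ⟨⟨⟨Quotient.mk _ ((1 : G) : G ⧸ H)⟩, fun _ => Subsingleton.elim _ _⟩⟩
  rw [h1, one_mul] at hb
  have hpos : ∀ g ∈ (Finset.univ : Finset G), 1 ≤ Fintype.card (MulAction.fixedBy (G ⧸ H) g) := by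
    intro g _
    refine Fintype.card_pos_iff.2 ⟨⟨((σ g : G) : G ⧸ H), ?_⟩⟩
    rw [MulAction.mem_fixedBy, MulAction.Quotient.smul_coe, eq_comm, QuotientGroup.eq]
    simpa [mul_assoc] using hmem g
  have hsum : ∑ _g : G, 1 = ∑ g : G, Fintype.card (MulAction.fixedBy (G ⧸ H) g) := by
    rw [hb]; simp
  have hone := (Finset.sum_eq_sum_iff_of_le hpos).1 hsum 1 (Finset.mem_univ _)
  have : Subsingleton (G ⧸ H) := by
    refine ⟨fun x y => ?_⟩
    have := Fintype.card_le_one_iff.1 hone.symm.le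
      ⟨x, by simp⟩ ⟨y, by simp⟩
    exact congrArg Subtype.val this
  exact QuotientGroup.subgroup_eq_top_of_subsingleton H this

/-! ### The invariant `mInv` -/

lemma ncard_le_mInv {G : Type*} [Group G] [Finite G] {S : Set G} (hS : MinInvGen S) :
    S.ncard ≤ mInv G := by
  refine le_csSup ⟨Nat.card G, ?_⟩ ⟨S, hS, rfl⟩
  rintro _ ⟨T, -, rfl⟩
  exact Set.ncard_le_card T

lemma mInv_le {G : Type*} [Group G] [Finite G] {n : ℕ}
    (h : ∀ S : Set G, MinInvGen S → S.ncard ≤ n) : mInv G ≤ n := by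
  refine csSup_le' ?_
  rintro _ ⟨T, hT, rfl⟩
  exact h T hT

/-- A subset of `S` minimal subject to its image being an invariable generating set maps
injectively to a minimal invariable generating set. -/
lemma exists_subset_ncard_le_mInv {G Q : Type*} [Group G] [Finite G] [Group Q] [Finite Q]
    (f : G →* Q) {S : Set G} (hS : InvGen (f '' S)) :
    ∃ T ⊆ S, MinInvGen (f '' T) ∧ T.ncard ≤ mInv Q := by
  obtain ⟨T, hTS, hT⟩ := exists_minimal_le_of_wellFoundedLT (fun T : Set G => InvGen (f '' T)) S hS
  have hmin : MinInvGen (f '' T) := by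
    refine ⟨hT.prop, fun U hU hUi => hU.2 ?_⟩
    have himg : f '' (T ∩ f ⁻¹' U) = U := by
      rw [Set.image_inter_preimage, Set.inter_eq_right.2 hU.1]
    have hle : T ⊆ T ∩ f ⁻¹' U :=
      hT.le_of_le (by rwa [himg]) Set.inter_subset_left
    rintro _ ⟨x, hx, rfl⟩
    exact (hle hx).2
  have hinj : Set.InjOn f T := by
    intro x hx y hy hxy
    by_contra hne
    have himg : f '' (T \ {x}) = f '' T := by
      refine (Set.image_mono Set.sdiff_subset).antisymm ?_
      rintro _ ⟨z, hz, rfl⟩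
      by_cases hzx : z = x
      · exact ⟨y, ⟨hy, fun h => hne h.symm⟩, by rw [hzx, hxy]⟩
      · exact ⟨z, ⟨hz, hzx⟩, rfl⟩
    have hle : T ⊆ T \ {x} :=
      hT.le_of_le (by rw [himg]; exact hT.prop) Set.sdiff_subset
    exact (hle hx).2 rfl
  refine ⟨T, hTS, hmin, ?_⟩
  rw [← hinj.ncard_image]
  exact ncard_le_mInv hmin

lemma exists_minInvGen_ncard (G : Type*) [Group G] [Finite G] :
    ∃ S : Set G, MinInvGen S ∧ S.ncard = mInv G := by
  have hne : {n : ℕ | ∃ S : Set G, MinInvGen S ∧ S.ncard = n}.Nonempty := by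
    obtain ⟨T, -, hT, -⟩ := exists_subset_ncard_le_mInv (MonoidHom.id G)
      (S := Set.univ) (by simpa using invGen_univ G)
    exact ⟨_, _, hT, rfl⟩
  refine Nat.sSup_mem hne ⟨Nat.card G, ?_⟩
  rintro _ ⟨T, -, rfl⟩
  exact Set.ncard_le_card T

/-! ### Subgroups of products without common simple sections -/

lemma hasCommonSimpleSection_of_surjective {A B Q : Type*} [Group A] [Group B] [Group Q]
    [IsSimpleGroup Q] (f : A →* Q) (hf : Function.Surjective f) (g : B →* Q)
    (hg : Function.Surjective g) : HasCommonSimpleSection A B := by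
  let f' := f.comp (⊤ : Subgroup A).subtype
  let g' := g.comp (⊤ : Subgroup B).subtype
  have hf' : Function.Surjective f' := fun q => (hf q).elim fun a ha => ⟨⟨a, trivial⟩, ha⟩
  have hg' : Function.Surjective g' := fun q => (hg q).elim fun b hb => ⟨⟨b, trivial⟩, hb⟩
  let e₁ := QuotientGroup.quotientKerEquivOfSurjective f' hf'
  let e₂ := QuotientGroup.quotientKerEquivOfSurjective g' hg'
  exact ⟨⊤, f'.ker, inferInstance, ⊤, g'.ker, inferInstance, e₁.isSimpleGroup, e₂.isSimpleGroup,
    ⟨e₁.trans e₂.symm⟩⟩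

lemma exists_le_isSimpleGroup_quotient {A : Type*} [Group A] [Finite A] (N : Subgroup A)
    (hN : N.Normal) (hne : N ≠ ⊤) :
    ∃ (K : Subgroup A) (_ : K.Normal), N ≤ K ∧ IsSimpleGroup (A ⧸ K) := by
  obtain ⟨K, hNK, hK⟩ := (Set.toFinite {K : Subgroup A | K.Normal ∧ K ≠ ⊤}).exists_le_maximal
    ⟨hN, hne⟩
  have hKn : K.Normal := hK.prop.1
  refine ⟨K, hKn, hNK, ?_⟩
  have : Nontrivial (A ⧸ K) := QuotientGroup.nontrivial_iff.2 hK.prop.2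
  refine ⟨fun L hL => ?_⟩
  have hs := QuotientGroup.mk'_surjective K
  have hKL : K ≤ L.comap (QuotientGroup.mk' K) := by
    intro x hx
    have : (QuotientGroup.mk' K) x = 1 := (QuotientGroup.eq_one_iff x).2 hx
    rw [Subgroup.mem_comap, this]
    exact one_mem L
  by_cases htop : L.comap (QuotientGroup.mk' K) = ⊤
  · right
    rw [← Subgroup.map_comap_eq_self_of_surjective hs L, htop,
      Subgroup.map_top_of_surjective _ hs]
  · left
    have hle := hK.le_of_ge ⟨hL.comap _, htop⟩ hKL
    rw [eq_bot_iff]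
    intro x hx
    obtain ⟨a, rfl⟩ := hs x
    exact (QuotientGroup.eq_one_iff a).2 (hle hx)

/-- If `H` is proper, the normal subgroup `{a | (a, 1) ∈ H}` of `A` is proper, hence is contained in
some `K` with `A ⧸ K` simple; then `H → A ⧸ K` factors through the projection `H → B`. -/
lemma eq_top_of_map_fst_snd {A B : Type*} [Group A] [Finite A] [Group B]
    (h : ¬ HasCommonSimpleSection A B) (H : Subgroup (A × B))
    (h1 : H.map (MonoidHom.fst A B) = ⊤) (h2 : H.map (MonoidHom.snd A B) = ⊤) : H = ⊤ := by
  have hs1 : Function.Surjective ((MonoidHom.fst A B).comp H.subtype) := by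
    intro a
    obtain ⟨x, hx, rfl⟩ : a ∈ H.map (MonoidHom.fst A B) := h1 ▸ trivial
    exact ⟨⟨x, hx⟩, rfl⟩
  have hs2 : Function.Surjective ((MonoidHom.snd A B).comp H.subtype) := by
    intro b
    obtain ⟨x, hx, rfl⟩ : b ∈ H.map (MonoidHom.snd A B) := h2 ▸ trivial
    exact ⟨⟨x, hx⟩, rfl⟩
  by_cases hN : H.goursatFst = ⊤
  · rw [eq_top_iff]
    rintro ⟨a, b⟩ -
    obtain ⟨⟨⟨a', b'⟩, hx⟩, rfl⟩ := hs2 b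
    have ha : a * a'⁻¹ ∈ H.goursatFst := hN ▸ trivial
    simpa using mul_mem (Subgroup.mem_goursatFst.1 ha) hx
  · exfalso
    obtain ⟨K, hK, hNK, hsimple⟩ :=
      exists_le_isSimpleGroup_quotient H.goursatFst (Subgroup.normal_goursatFst hs1) hN
    let q : H →* A ⧸ K := (QuotientGroup.mk' K).comp ((MonoidHom.fst A B).comp H.subtype)
    have hq : Function.Surjective q := (QuotientGroup.mk'_surjective K).comp hs1
    have hker : ((MonoidHom.snd A B).comp H.subtype).ker ≤ q.ker := by
      rintro ⟨⟨a, b⟩, hx⟩ hb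
      have hb : b = 1 := hb
      subst hb
      exact (QuotientGroup.eq_one_iff a).2 (hNK (Subgroup.mem_goursatFst.2 hx))
    let φ : B →* A ⧸ K := MonoidHom.liftOfSurjective _ hs2 ⟨q, hker⟩
    have hφ : Function.Surjective φ := by
      intro y
      obtain ⟨x, rfl⟩ := hq y
      exact ⟨_, MonoidHom.liftOfRightInverse_comp_apply _ _
        (Function.rightInverse_surjInv hs2) ⟨q, hker⟩ x⟩
    exact h (hasCommonSimpleSection_of_surjective _ (QuotientGroup.mk'_surjective K) φ hφ)

lemma invGen_prod_iff {A B : Type*} [Group A] [Finite A] [Group B]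
    (h : ¬ HasCommonSimpleSection A B) (S : Set (A × B)) :
    InvGen S ↔ InvGen (MonoidHom.fst A B '' S) ∧ InvGen (MonoidHom.snd A B '' S) :=
  ⟨fun hS => ⟨hS.image _ Prod.fst_surjective, hS.image _ Prod.snd_surjective⟩,
    fun hS σ => eq_top_of_map_fst_snd h _ (map_closure_eq_top _ hS.1 σ)
      (map_closure_eq_top _ hS.2 σ)⟩

lemma MinInvGen.prod {A B : Type*} [Group A] [Finite A] [Group B]
    (h : ¬ HasCommonSimpleSection A B) {S : Set A} {T : Set B} (hS : MinInvGen S)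
    (hT : MinInvGen T) :
    MinInvGen ((fun a => (a, (1 : B))) '' S ∪ (fun b => ((1 : A), b)) '' T) := by
  constructor
  · refine (invGen_prod_iff h _).2 ⟨hS.1.mono ?_, hT.1.mono ?_⟩
    · exact fun a ha => ⟨(a, 1), Or.inl ⟨a, ha, rfl⟩, rfl⟩
    · exact fun b hb => ⟨(1, b), Or.inr ⟨b, hb, rfl⟩, rfl⟩
  · intro U hU hUi
    apply hU.2
    obtain ⟨hU1, hU2⟩ := (invGen_prod_iff h U).1 hUi
    -- The projections of `U`, with the identity discarded, are contained in `S` and `T`.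
    have e1 : (MonoidHom.fst A B '' U) \ {1} = S := by
      refine hS.eq_of_subset hU1.diff_one ?_
      rintro _ ⟨⟨x, hx, rfl⟩, hx1⟩
      rcases hU.1 hx with ⟨a, ha, rfl⟩ | ⟨b, hb, rfl⟩
      · exact ha
      · exact absurd rfl hx1
    have e2 : (MonoidHom.snd A B '' U) \ {1} = T := by
      refine hT.eq_of_subset hU2.diff_one ?_
      rintro _ ⟨⟨x, hx, rfl⟩, hx1⟩
      rcases hU.1 hx with ⟨a, ha, rfl⟩ | ⟨b, hb, rfl⟩
      · exact absurd rfl hx1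
      · exact hb
    rintro _ (⟨a, ha, rfl⟩ | ⟨b, hb, rfl⟩)
    · rw [← e1] at ha
      obtain ⟨⟨x, hx, rfl⟩, hx1⟩ := ha
      rcases hU.1 hx with ⟨a, ha, rfl⟩ | ⟨b, hb, rfl⟩
      · exact hx
      · exact absurd rfl hx1
    · rw [← e2] at hb
      obtain ⟨⟨x, hx, rfl⟩, hx1⟩ := hb
      rcases hU.1 hx with ⟨a, ha, rfl⟩ | ⟨b, hb, rfl⟩
      · exact absurd rfl hx1
      · exact hx

/-- If the finite groups `A` and `B` have no common composition factor,
then `m_I(A × B) = m_I(A) + m_I(B)`. -/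
theorem stmt9 (A B : Type*) [Group A] [Finite A] [Group B] [Finite B]
    (h : ¬ HasCommonSimpleSection A B) :
    mInv (A × B) = mInv A + mInv B := by
  apply le_antisymm
  · refine mInv_le fun S hS => ?_
    obtain ⟨hS1, hS2⟩ := (invGen_prod_iff h S).1 hS.1
    obtain ⟨S₁, hS₁, hg₁, hc₁⟩ := exists_subset_ncard_le_mInv _ hS1
    obtain ⟨S₂, hS₂, hg₂, hc₂⟩ := exists_subset_ncard_le_mInv _ hS2
    have hunion : InvGen (S₁ ∪ S₂) := (invGen_prod_iff h _).2
      ⟨hg₁.1.mono (Set.image_mono Set.subset_union_left),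
        hg₂.1.mono (Set.image_mono Set.subset_union_right)⟩
    rw [← hS.eq_of_subset hunion (Set.union_subset hS₁ hS₂)]
    exact (Set.ncard_union_le _ _).trans (add_le_add hc₁ hc₂)
  · obtain ⟨S, hS, hSc⟩ := exists_minInvGen_ncard A
    obtain ⟨T, hT, hTc⟩ := exists_minInvGen_ncard B
    have hdisj : Disjoint ((fun a => (a, (1 : B))) '' S) ((fun b => ((1 : A), b)) '' T) := by
      rw [Set.disjoint_left]
      rintro _ ⟨a, ha, rfl⟩ ⟨b, hb, hab⟩
      have : a = 1 := (congrArg Prod.fst hab).symm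
      exact hS.one_notMem (this ▸ ha)
    have hle := ncard_le_mInv (hS.prod h hT)
    rwa [Set.ncard_union_eq hdisj (Set.toFinite _) (Set.toFinite _),
      Set.ncard_image_of_injective S (Prod.mk_left_injective (1 : B)),
      Set.ncard_image_of_injective T (Prod.mk_right_injective (1 : A)), hSc, hTc] at hle
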